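/- Suppose there exists r₀ > 1 such that the Gaussian curvature of g satisfies K_g(r,θ) ≥ −1/(r² log r) for all r > r₀ and all θ. Then (ℝ², g) is parabolic: every C² subharmonic function u : ℝ² → ℝ (Δ_g u ≥ 0) that is bounded above is constant. -/

import Mathlib

open Real Filter Set

/-- The Laplace–Beltrami operator of the metric `g = dr² + f(r,θ)² dθ²` acting on a
function `u` of the plane, expressed in polar coordinates `(r, θ)`. -/
noncomputable def polarLaplacian (f : ℝ → ℝ → ℝ) (u : ℝ × ℝ → ℝ) (r θ : ℝ) : ℝ :=
  deriv (deriv (fun s => u (s * Real.cos θ, s * Real.sin θ))) r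
    + (deriv (fun s => f s θ) r / f r θ) *
        deriv (fun s => u (s * Real.cos θ, s * Real.sin θ)) r
    + (1 / (f r θ) ^ 2) *
        deriv (deriv (fun t => u (r * Real.cos t, r * Real.sin t))) θ
    - (deriv (fun t => f r t) θ / (f r θ) ^ 3) *
        deriv (fun t => u (r * Real.cos t, r * Real.sin t)) θ

/-!
Put `w = e^u`, so that `Δw ≥ e^u |∂u/∂r|²`, and let `J(r)` be the flux of `grad w` through the
circle of radius `r` and `L(r)` its length. By the Cauchy–Schwarz inequality, `J² ≤ C L J'`. A
curvature bound `K ≥ -1/(r² log r)` gives `L(r) ≤ C r log r` by Sturm comparison with the solution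
`r log r` of `ψ'' = ψ/(r² log r)`; since `∫ dr/(r log r) = ∞`, a positive value of `J` would make
it blow up at a finite radius. Hence `J ≤ 0`.

The reverse inequality is delicate because `f → 0` is only assumed along each ray, with no
uniformity in `θ`, so that the flux through small circles is not obviously small; it suffices that
its lower limit at the origin is nonnegative. Truncate `f` below `1`: the field with Cartesian
components `φ(f) ∂u/∂r` and `τ(f) ∂u/∂θ`, where `τ' = -φ'/s²`, has divergence bounded below and
vanishes near the origin along every ray. On the closed set of angles for which it vanishes for
all `r < 1/n` the divergence theorem bounds the flux through the arcs with end points in the set,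
and these sets cover the line, so a nested interval argument propagates the bound to every arc.
Thus `J = 0`, then `J' = 0`, and `∂u/∂r = 0`.
-/

open Function Topology

/-! ### Real analysis -/

theorem monotoneOn_of_hasDerivAt_nonneg {s : Set ℝ} (hs : Convex ℝ s) {φ φ' : ℝ → ℝ}
    (hφ : ∀ r ∈ s, HasDerivAt φ (φ' r) r) (hφ' : ∀ r ∈ s, 0 ≤ φ' r) : MonotoneOn φ s :=
  monotoneOn_of_hasDerivWithinAt_nonneg hs (HasDerivAt.continuousOn hφ)
    (fun r hr => (hφ r (interior_subset hr)).hasDerivWithinAt)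
    fun r hr => hφ' r (interior_subset hr)

theorem antitoneOn_of_hasDerivAt_nonpos {s : Set ℝ} (hs : Convex ℝ s) {φ φ' : ℝ → ℝ}
    (hφ : ∀ r ∈ s, HasDerivAt φ (φ' r) r) (hφ' : ∀ r ∈ s, φ' r ≤ 0) : AntitoneOn φ s :=
  antitoneOn_of_hasDerivWithinAt_nonpos hs (HasDerivAt.continuousOn hφ)
    (fun r hr => (hφ r (interior_subset hr)).hasDerivWithinAt)
    fun r hr => hφ' r (interior_subset hr)

theorem eventually_le_nhdsGT_of_hasDerivAt_pos {ψ : ℝ → ℝ} {ψ' z : ℝ} (hψ : HasDerivAt ψ ψ' z)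
    (hpos : 0 < ψ') : ∀ᶠ t in 𝓝[>] z, ψ z ≤ ψ t := by
  have hslope : ∀ᶠ t in 𝓝[>] z, 0 < slope ψ z t :=
    ((hasDerivAt_iff_tendsto_slope.1 hψ).mono_left (nhdsGT_le_nhdsNE z)).eventually
      (lt_mem_nhds hpos)
  filter_upwards [hslope, self_mem_nhdsWithin] with t ht hzt
  rw [slope_def_field, div_pos_iff_of_pos_right (sub_pos.2 hzt)] at ht
  linarith

theorem le_of_isClosed_of_le_across_gaps {E : Set ℝ} (hE : IsClosed E) {ψ : ℝ → ℝ} {p q : ℝ}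
    (hp : p ∈ E) (hq : q ∈ E) (hpq : p ≤ q) (hψ : ContinuousOn ψ (Icc p q))
    (hright : ∀ z ∈ E, p ≤ z → z < q → ∀ᶠ t in 𝓝[>] z, ψ z ≤ ψ t)
    (hgap : ∀ z ∈ E, ∀ w ∈ E, p ≤ z → z < w → w ≤ q → Disjoint (Ioo z w) E → ψ z ≤ ψ w) :
    ψ p ≤ ψ q := by
  obtain ⟨z, ⟨⟨hz, hψz⟩, hzE⟩, hzmax⟩ : ∃ z, IsGreatest ((Icc p q ∩ ψ ⁻¹' Ici (ψ p)) ∩ E) z :=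
    ((isCompact_Icc.of_isClosed_subset
      (hψ.preimage_isClosed_of_isClosed isClosed_Icc isClosed_Ici) inter_subset_left).inter_right
      hE).exists_isGreatest
      ⟨p, ⟨left_mem_Icc.2 hpq, mem_preimage.2 self_mem_Ici⟩, hp⟩
  have hmax : ∀ t ∈ E, z < t → t ≤ q → ψ t < ψ z := fun t ht hzt htq => by
    by_contra! hψt
    exact hzt.not_ge (hzmax ⟨⟨⟨hz.1.trans hzt.le, htq⟩, le_trans hψz hψt⟩, ht⟩)
  rcases hz.2.eq_or_lt with rfl | hzq
  · exact hψz
  exfalso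
  obtain ⟨w, hzw, hw⟩ := mem_nhdsGT_iff_exists_Ioc_subset.1
    ((hright z hzE hz.1 hzq).and (Ioc_mem_nhdsGT hzq))
  have hzw : z < w := hzw
  have hwq : w ≤ q := (hw (right_mem_Ioc.2 hzw)).2.2
  obtain ⟨w', ⟨hw', hwE⟩, hwmin⟩ : ∃ w', IsLeast (Icc w q ∩ E) w' :=
    (isCompact_Icc.inter_right hE).exists_isLeast ⟨q, right_mem_Icc.2 hwq, hq⟩
  refine (hmax w' hwE (hzw.trans_le hw'.1) hw'.2).not_ge
    (hgap z hzE w' hwE hz.1 (hzw.trans_le hw'.1) hw'.2 (disjoint_left.2 fun t ht htE => ?_))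
  rcases le_total t w with htw | hwt
  · have := hw ⟨ht.1, htw⟩
    exact (hmax t htE ht.1 this.2.2).not_ge this.1
  · exact ht.2.not_ge (hwmin ⟨⟨hwt, ht.2.le.trans hw'.2⟩, htE⟩)

/- A bad interval contains a bad interval missing `E 0`, which contains a bad interval missing
`E 1`, and so on; the intersection of these intervals meets no `E k`. -/
theorem interval_induction_of_subset_iUnion {P : ℝ → ℝ → Prop} {E : ℕ → Set ℝ} {a b : ℝ}
    (hcover : Icc a b ⊆ ⋃ k, E k)
    (hstep : ∀ k x y, a ≤ x → x ≤ y → y ≤ b →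
      (∀ x' y', x ≤ x' → x' ≤ y' → y' ≤ y → Disjoint (Icc x' y') (E k) → P x' y') → P x y)
    (hab : a ≤ b) : P a b := by
  by_contra hbad
  let Bad : Set (ℝ × ℝ) := {I | a ≤ I.1 ∧ I.1 ≤ I.2 ∧ I.2 ≤ b ∧ ¬ P I.1 I.2}
  have hshrink : ∀ k, ∀ I : Bad, ∃ J : Bad,
      Icc J.1.1 J.1.2 ⊆ Icc I.1.1 I.1.2 ∧ Disjoint (Icc J.1.1 J.1.2) (E k) := by
    rintro k ⟨⟨x, y⟩, hax, hxy, hyb, hP⟩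
    by_contra! hno
    refine hP (hstep k x y hax hxy hyb fun x' y' hx hxy' hy hdisj => ?_)
    by_contra hP'
    exact hno ⟨(x', y'), hax.trans hx, hxy', hy.trans hyb, hP'⟩ (Icc_subset_Icc hx hy) hdisj
  choose next hsub hdisj using hshrink
  let I : ℕ → Bad := Nat.rec ⟨(a, b), le_rfl, hab, le_rfl, hbad⟩ next
  obtain ⟨t, ht⟩ : (⋂ k, Icc (I k).1.1 (I k).1.2).Nonempty :=
    IsCompact.nonempty_iInter_of_sequence_nonempty_isCompact_isClosed _
      (fun k => hsub k (I k)) (fun k => nonempty_Icc.2 (I k).2.2.1) isCompact_Icc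
      fun _ => isClosed_Icc
  rw [mem_iInter] at ht
  obtain ⟨k, hk⟩ := mem_iUnion.1 (hcover (ht 0))
  exact disjoint_left.1 (hdisj k (I k)) (ht (k + 1)) hk

theorem sq_integral_mul_le {p q : ℝ → ℝ} (hp : Continuous p) (hq : Continuous q)
    (hp0 : ∀ t, 0 ≤ p t) {a b : ℝ} (hab : a ≤ b) :
    (∫ t in a..b, p t * q t) ^ 2 ≤ (∫ t in a..b, p t) * ∫ t in a..b, p t * q t ^ 2 := by
  have hquadratic : ∀ s : ℝ, 0 ≤ (∫ t in a..b, p t * q t ^ 2) * (s * s)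
      + (2 * ∫ t in a..b, p t * q t) * s + ∫ t in a..b, p t := by
    intro s
    calc 0 ≤ ∫ t in a..b, p t * (q t * s + 1) ^ 2 :=
        intervalIntegral.integral_nonneg hab fun t _ => mul_nonneg (hp0 t) (sq_nonneg _)
      _ = ∫ t in a..b, (p t * q t ^ 2 * (s * s) + p t * q t * (2 * s) + p t) :=
        intervalIntegral.integral_congr fun t _ => by ring
      _ = _ := by
        rw [intervalIntegral.integral_add (Continuous.intervalIntegrable (by fun_prop) a b)
            (hp.intervalIntegrable a b),
          intervalIntegral.integral_add (Continuous.intervalIntegrable (by fun_prop) a b)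
            (Continuous.intervalIntegrable (by fun_prop) a b),
          intervalIntegral.integral_mul_const, intervalIntegral.integral_mul_const]
        ring
  have := discrim_le_zero hquadratic
  rw [discrim] at this
  linarith

/- `J⁻¹ + G` decreases as long as `J > 0`, so `G` would be bounded. -/
theorem nonpos_of_deriv_mul_sq_le_deriv {J J' G G' : ℝ → ℝ} {a : ℝ}
    (hJ : ∀ r, a ≤ r → HasDerivAt J (J' r) r) (hG : ∀ r, a ≤ r → HasDerivAt G (G' r) r)
    (hG' : ∀ r, a ≤ r → 0 ≤ G' r) (hle : ∀ r, a ≤ r → G' r * J r ^ 2 ≤ J' r)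
    (hlim : Tendsto G atTop atTop) : J a ≤ 0 := by
  by_contra! hpos
  have hJmono : MonotoneOn J (Ici a) :=
    monotoneOn_of_hasDerivAt_nonneg (convex_Ici a) hJ fun r hr =>
      (mul_nonneg (hG' r hr) (sq_nonneg _)).trans (hle r hr)
  have hJpos : ∀ r, a ≤ r → 0 < J r := fun r hr => hpos.trans_le (hJmono self_mem_Ici hr hr)
  have hderiv : ∀ r, a ≤ r →
      HasDerivAt (fun s => (J s)⁻¹ + G s) (-J' r / J r ^ 2 + G' r) r := fun r hr =>
    ((hJ r hr).inv (hJpos r hr).ne').add (hG r hr)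
  have hanti : AntitoneOn (fun s => (J s)⁻¹ + G s) (Ici a) := by
    refine antitoneOn_of_hasDerivAt_nonpos (convex_Ici a) hderiv fun r hr => ?_
    have : G' r ≤ J' r / J r ^ 2 := (le_div_iff₀ (pow_pos (hJpos r hr) 2)).2 (hle r hr)
    rw [neg_div]
    linarith
  obtain ⟨r, har, hr⟩ :=
    ((eventually_ge_atTop a).and (hlim.eventually_gt_atTop ((J a)⁻¹ + G a))).exists
  have : (J r)⁻¹ + G r ≤ (J a)⁻¹ + G a := hanti self_mem_Ici har har
  linarith [inv_pos.2 (hJpos r har)]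

/- The Wronskian `φ' ψ - φ ψ'` decreases. -/
theorem antitoneOn_div_of_sturm {φ φ' φ'' ψ ψ' ψ'' : ℝ → ℝ} {a : ℝ}
    (hφ : ∀ r, a ≤ r → HasDerivAt φ (φ' r) r) (hφ' : ∀ r, a ≤ r → HasDerivAt φ' (φ'' r) r)
    (hψ : ∀ r, a ≤ r → HasDerivAt ψ (ψ' r) r) (hψ' : ∀ r, a ≤ r → HasDerivAt ψ' (ψ'' r) r)
    (hpos : ∀ r, a ≤ r → 0 < ψ r) (hle : ∀ r, a ≤ r → φ'' r * ψ r ≤ φ r * ψ'' r)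
    (hinit : φ' a * ψ a ≤ φ a * ψ' a) : AntitoneOn (fun r => φ r / ψ r) (Ici a) := by
  have hwronskian : AntitoneOn (fun r => φ' r * ψ r - φ r * ψ' r) (Ici a) := by
    have hderiv : ∀ r, a ≤ r → HasDerivAt (fun r => φ' r * ψ r - φ r * ψ' r)
        (φ'' r * ψ r - φ r * ψ'' r) r := fun r hr =>
      (((hφ' r hr).mul (hψ r hr)).sub ((hφ r hr).mul (hψ' r hr))).congr_deriv (by ring)
    exact antitoneOn_of_hasDerivAt_nonpos (convex_Ici a) hderiv fun r hr =>
      sub_nonpos.2 (hle r hr)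
  have hderiv : ∀ r, a ≤ r →
      HasDerivAt (fun r => φ r / ψ r) ((φ' r * ψ r - φ r * ψ' r) / ψ r ^ 2) r := fun r hr =>
    (hφ r hr).div (hψ r hr) (hpos r hr).ne'
  refine antitoneOn_of_hasDerivAt_nonpos (convex_Ici a) hderiv fun r hr => ?_
  have := hwronskian self_mem_Ici hr hr
  exact div_nonpos_of_nonpos_of_nonneg (by linarith) (sq_nonneg _)

/-! ### Partial derivatives in polar coordinates and integrals over arcs -/

/-- The partial derivative `∂F/∂r` of a function of the polar coordinates `(r, θ)`. -/
noncomputable def radialDeriv (F : ℝ → ℝ → ℝ) (r θ : ℝ) : ℝ := deriv (fun s => F s θ) r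

/-- The partial derivative `∂F/∂θ` of a function of the polar coordinates `(r, θ)`. -/
noncomputable def angularDeriv (F : ℝ → ℝ → ℝ) (r θ : ℝ) : ℝ := deriv (F r) θ

/-- The range `r > 0` of the polar coordinates; the angle is a real number, not taken modulo
`2π`. -/
abbrev polarDomain : Set (ℝ × ℝ) := {p | 0 < p.1}

/-- The integral over the arc `x ≤ θ ≤ y` of the circle of radius `r`, with respect to the angle
and not to arc length. -/
noncomputable def arcIntegral (h : ℝ → ℝ → ℝ) (x y r : ℝ) : ℝ := ∫ θ in x..y, h r θ

theorem isOpen_polarDomain : IsOpen polarDomain := isOpen_lt continuous_const continuous_fst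

section PartialDerivatives

variable {F : ℝ → ℝ → ℝ} {r θ : ℝ}

theorem hasDerivAt_fderiv_left (hF : DifferentiableAt ℝ (uncurry F) (r, θ)) :
    HasDerivAt (fun s => F s θ) (fderiv ℝ (uncurry F) (r, θ) (1, 0)) r :=
  HasFDerivAt.comp_hasDerivAt (f := fun s => (s, θ)) r hF.hasFDerivAt
    ((hasDerivAt_id r).prodMk (hasDerivAt_const r θ))

theorem hasDerivAt_fderiv_right (hF : DifferentiableAt ℝ (uncurry F) (r, θ)) :
    HasDerivAt (F r) (fderiv ℝ (uncurry F) (r, θ) (0, 1)) θ :=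
  HasFDerivAt.comp_hasDerivAt (f := fun t => (r, t)) θ hF.hasFDerivAt
    ((hasDerivAt_const θ r).prodMk (hasDerivAt_id θ))

section Regularity

variable {U : Set (ℝ × ℝ)} {m n : WithTop ℕ∞}

theorem contDiffOn_radialDeriv (hU : IsOpen U) (hF : ContDiffOn ℝ n (uncurry F) U)
    (hmn : m + 1 ≤ n) : ContDiffOn ℝ m (uncurry (radialDeriv F)) U := by
  refine ((hF.fderiv_of_isOpen hU hmn).clm_apply (contDiffOn_const (c := ((1 : ℝ), (0 : ℝ))))).congr
    fun p hp => ?_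
  exact (hasDerivAt_fderiv_left ((hF.differentiableOn (by rintro rfl; simp at hmn)).differentiableAt
    (hU.mem_nhds hp))).deriv

theorem contDiffOn_angularDeriv (hU : IsOpen U) (hF : ContDiffOn ℝ n (uncurry F) U)
    (hmn : m + 1 ≤ n) : ContDiffOn ℝ m (uncurry (angularDeriv F)) U := by
  refine ((hF.fderiv_of_isOpen hU hmn).clm_apply (contDiffOn_const (c := ((0 : ℝ), (1 : ℝ))))).congr
    fun p hp => ?_
  exact (hasDerivAt_fderiv_right
    ((hF.differentiableOn (by rintro rfl; simp at hmn)).differentiableAt (hU.mem_nhds hp))).deriv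

theorem contDiff_radialDeriv (hF : ContDiff ℝ n (uncurry F)) (hmn : m + 1 ≤ n) :
    ContDiff ℝ m (uncurry (radialDeriv F)) :=
  contDiffOn_univ.1 (contDiffOn_radialDeriv isOpen_univ hF.contDiffOn hmn)

theorem contDiff_angularDeriv (hF : ContDiff ℝ n (uncurry F)) (hmn : m + 1 ≤ n) :
    ContDiff ℝ m (uncurry (angularDeriv F)) :=
  contDiffOn_univ.1 (contDiffOn_angularDeriv isOpen_univ hF.contDiffOn hmn)

end Regularity

theorem periodic_angularDeriv {c : ℝ} (hF : Periodic (F r) c) : Periodic (angularDeriv F r) c := by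
  intro θ
  rw [angularDeriv, ← deriv_comp_add_const, funext hF, angularDeriv]

theorem continuous_of_continuousOn_polarDomain (hF : ContinuousOn (uncurry F) polarDomain)
    (hr : 0 < r) : Continuous (F r) :=
  hF.comp_continuous (f := fun θ => (r, θ)) (by fun_prop) fun _ => hr

variable (hF : ContDiffOn ℝ 1 (uncurry F) polarDomain)
include hF

theorem hasDerivAt_radialDeriv (hr : 0 < r) : HasDerivAt (fun s => F s θ) (radialDeriv F r θ) r :=
  (hasDerivAt_fderiv_left ((hF.differentiableOn one_ne_zero).differentiableAt
    (isOpen_polarDomain.mem_nhds hr))).differentiableAt.hasDerivAt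

theorem hasDerivAt_angularDeriv (hr : 0 < r) : HasDerivAt (F r) (angularDeriv F r θ) θ :=
  (hasDerivAt_fderiv_right ((hF.differentiableOn one_ne_zero).differentiableAt
    (isOpen_polarDomain.mem_nhds hr))).differentiableAt.hasDerivAt

theorem continuousOn_radialDeriv : ContinuousOn (uncurry (radialDeriv F)) polarDomain :=
  (contDiffOn_radialDeriv (m := 0) isOpen_polarDomain hF (by simp)).continuousOn

theorem continuousOn_angularDeriv : ContinuousOn (uncurry (angularDeriv F)) polarDomain :=
  (contDiffOn_angularDeriv (m := 0) isOpen_polarDomain hF (by simp)).continuousOn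

end PartialDerivatives

section ArcIntegral

variable {h T : ℝ → ℝ → ℝ} {r : ℝ}

theorem arcIntegral_self (h : ℝ → ℝ → ℝ) (x r : ℝ) : arcIntegral h x x r = 0 :=
  intervalIntegral.integral_same

theorem arcIntegral_add (hh : ContinuousOn (uncurry h) polarDomain)
    (hT : ContinuousOn (uncurry T) polarDomain) (x y : ℝ) (hr : 0 < r) :
    arcIntegral (fun s t => h s t + T s t) x y r = arcIntegral h x y r + arcIntegral T x y r :=
  intervalIntegral.integral_add
    ((continuous_of_continuousOn_polarDomain hh hr).intervalIntegrable x y)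
    ((continuous_of_continuousOn_polarDomain hT hr).intervalIntegrable x y)

theorem arcIntegral_add_adjacent (hh : ContinuousOn (uncurry h) polarDomain) (hr : 0 < r)
    (x y z : ℝ) : arcIntegral h x y r + arcIntegral h y z r = arcIntegral h x z r :=
  have hc := continuous_of_continuousOn_polarDomain hh hr
  intervalIntegral.integral_add_adjacent_intervals (hc.intervalIntegrable x y)
    (hc.intervalIntegrable y z)

theorem hasDerivAt_arcIntegral (hh : ContDiffOn ℝ 1 (uncurry h) polarDomain) (x y : ℝ)
    (hr : 0 < r) : HasDerivAt (arcIntegral h x y) (arcIntegral (radialDeriv h) x y r) r := by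
  have hc := fun s => continuous_of_continuousOn_polarDomain (r := s) hh.continuousOn
  have hc' := continuousOn_radialDeriv hh
  have hK : IsCompact (Icc (r / 2) (2 * r) ×ˢ uIcc x y) := isCompact_Icc.prod isCompact_uIcc
  obtain ⟨B, hB⟩ := hK.exists_bound_of_continuousOn
    (hc'.mono fun p hp => (half_pos hr).trans_le hp.1.1)
  refine (intervalIntegral.hasDerivAt_integral_of_dominated_loc_of_deriv_le (F' := radialDeriv h)
    (bound := fun _ => B) (Icc_mem_nhds (half_lt_self hr) (by linarith : r < 2 * r)) ?_
    ((hc r hr).intervalIntegrable x y)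
    (continuous_of_continuousOn_polarDomain hc' hr).aestronglyMeasurable ?_
    intervalIntegrable_const ?_).2
  · filter_upwards [Ioi_mem_nhds hr] with s hs
    exact (hc s hs).aestronglyMeasurable
  · exact Eventually.of_forall fun θ hθ s hs => hB (s, θ) ⟨hs, uIoc_subset_uIcc hθ⟩
  · exact Eventually.of_forall fun θ _ s hs =>
      hasDerivAt_radialDeriv hh ((half_pos hr).trans_le hs.1)

theorem arcIntegral_divergence (hh : ContDiffOn ℝ 1 (uncurry h) polarDomain)
    (hT : ContDiffOn ℝ 1 (uncurry T) polarDomain) (x y : ℝ) (hr : 0 < r) :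
    arcIntegral (fun s t => radialDeriv h s t + angularDeriv T s t) x y r
      = arcIntegral (radialDeriv h) x y r + (T r y - T r x) := by
  have hT' := continuousOn_angularDeriv hT
  rw [arcIntegral_add (continuousOn_radialDeriv hh) hT' x y hr]
  exact congrArg _ (intervalIntegral.integral_eq_sub_of_hasDerivAt
    (fun θ _ => hasDerivAt_angularDeriv hT hr)
    ((continuous_of_continuousOn_polarDomain hT' hr).intervalIntegrable x y))

end ArcIntegral

/-! ### Functions with nonnegative lower limit at the origin -/

/-- The lower limit of `m` at `0⁺` is nonnegative (it may be `+∞`). -/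
def AsympNonneg (m : ℝ → ℝ) : Prop := ∀ ε > 0, ∀ᶠ r in 𝓝[>] 0, -ε ≤ m r

namespace AsympNonneg

variable {m m' : ℝ → ℝ}

theorem congr (hm : AsympNonneg m) (hmm' : m =ᶠ[𝓝[>] 0] m') : AsympNonneg m' := fun ε hε => by
  filter_upwards [hm ε hε, hmm'] with r hr hrr
  rwa [← hrr]

theorem add (hm : AsympNonneg m) (hm' : AsympNonneg m') : AsympNonneg (fun r => m r + m' r) :=
  fun ε hε => by
    filter_upwards [hm (ε / 2) (half_pos hε), hm' (ε / 2) (half_pos hε)] with r hr hr'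
    linarith

theorem of_tendsto_zero (hm : Tendsto m (𝓝[>] 0) (𝓝 0)) : AsympNonneg m := fun ε hε => by
  filter_upwards [hm.eventually (lt_mem_nhds (neg_lt_zero.2 hε))] with r hr using hr.le

theorem of_neg_mul_le {C ρ : ℝ} (hρ : 0 < ρ) (hm : ∀ r ∈ Ioo 0 ρ, -(C * r) ≤ m r) :
    AsympNonneg m := fun ε hε => by
  have hlin : Tendsto (fun r => C * r) (𝓝[>] 0) (𝓝 0) :=
    Continuous.tendsto' (by fun_prop) _ _ (mul_zero C) |>.mono_left nhdsWithin_le_nhds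
  filter_upwards [hlin.eventually (gt_mem_nhds hε), Ioo_mem_nhdsGT hρ] with r hCr hr
  linarith [hm r hr]

theorem neg_mul_le_of_neg_le_deriv {c ρ : ℝ} (hm : AsympNonneg m)
    (hderiv : ∀ r ∈ Ioo 0 ρ, HasDerivAt m (m' r) r) (hbound : ∀ r ∈ Ioo 0 ρ, -c ≤ m' r) :
    ∀ r ∈ Ioo 0 ρ, -(c * r) ≤ m r := by
  intro r hr
  have hmono : MonotoneOn (fun s => m s + c * s) (Ioo 0 ρ) :=
    monotoneOn_of_hasDerivAt_nonneg (convex_Ioo 0 ρ)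
      (fun s hs => (hderiv s hs).add ((hasDerivAt_id s).const_mul c))
      fun s hs => by linarith [hbound s hs]
  have hlin : Tendsto (fun s => c * s) (𝓝[>] 0) (𝓝 0) :=
    Continuous.tendsto' (by fun_prop) _ _ (mul_zero c) |>.mono_left nhdsWithin_le_nhds
  refine le_of_forall_pos_le_add fun ε hε => ?_
  obtain ⟨s, hms, hs⟩ :=
    ((hm.add (of_tendsto_zero hlin) ε hε).and (Ioo_mem_nhdsGT hr.1)).exists
  have : m s + c * s ≤ m r + c * r := hmono ⟨hs.1, hs.2.trans hr.2⟩ hr hs.2.le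
  linarith

end AsympNonneg

/-! ### Vector fields that vanish near the origin along every ray -/

/-- A `C¹` vector field with radial component `h` and angular component `T` in the polar
coordinates, regarded as Cartesian ones; on the sector `0 < r < ρ`, `a ≤ θ ≤ b` its divergence is
at least `-D` and its angular component is bounded by `B`. -/
structure IsSectorField (h T : ℝ → ℝ → ℝ) (ρ a b D B : ℝ) : Prop where
  contDiffOn_radial : ContDiffOn ℝ 1 (uncurry h) polarDomain
  contDiffOn_angular : ContDiffOn ℝ 1 (uncurry T) polarDomain
  neg_le_divergence : ∀ r ∈ Ioo 0 ρ, ∀ θ ∈ Icc a b, -D ≤ radialDeriv h r θ + angularDeriv T r θ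
  abs_angular_le : ∀ r ∈ Ioo 0 ρ, ∀ θ ∈ Icc a b, |T r θ| ≤ B

namespace IsSectorField

variable {h T : ℝ → ℝ → ℝ} {ρ a b D B : ℝ}

theorem mono {δ x y : ℝ} (hF : IsSectorField h T ρ a b D B) (hδ : δ ≤ ρ) (hax : a ≤ x)
    (hyb : y ≤ b) : IsSectorField h T δ x y D B where
  contDiffOn_radial := hF.contDiffOn_radial
  contDiffOn_angular := hF.contDiffOn_angular
  neg_le_divergence r hr θ hθ :=
    hF.neg_le_divergence r ⟨hr.1, hr.2.trans_le hδ⟩ θ ⟨hax.trans hθ.1, hθ.2.trans hyb⟩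
  abs_angular_le r hr θ hθ :=
    hF.abs_angular_le r ⟨hr.1, hr.2.trans_le hδ⟩ θ ⟨hax.trans hθ.1, hθ.2.trans hyb⟩

variable (hF : IsSectorField h T ρ a b D B)
include hF

theorem continuous_radial {r : ℝ} (hr : 0 < r) : Continuous (h r) :=
  continuous_of_continuousOn_polarDomain hF.contDiffOn_radial.continuousOn hr

theorem neg_mul_le_arcIntegral {M : ℝ} (hab : a ≤ b) (hflux : AsympNonneg (arcIntegral h a b))
    (hT : ∀ r ∈ Ioo 0 ρ, T r b - T r a ≤ M) :
    ∀ r ∈ Ioo 0 ρ, -((D * (b - a) + M) * r) ≤ arcIntegral h a b r := by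
  refine hflux.neg_mul_le_of_neg_le_deriv
    (fun r hr => hasDerivAt_arcIntegral hF.contDiffOn_radial a b hr.1) fun r hr => ?_
  have hdiv : -(D * (b - a)) ≤
      arcIntegral (fun s t => radialDeriv h s t + angularDeriv T s t) a b r := by
    have hc := continuous_of_continuousOn_polarDomain
      (continuousOn_radialDeriv hF.contDiffOn_radial) hr.1
    have hc' := continuous_of_continuousOn_polarDomain
      (continuousOn_angularDeriv hF.contDiffOn_angular) hr.1
    calc -(D * (b - a)) = ∫ _ in a..b, -D := by
          rw [intervalIntegral.integral_const, smul_eq_mul]; ring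
      _ ≤ _ := intervalIntegral.integral_mono_on hab intervalIntegrable_const
          ((hc.add hc').intervalIntegrable a b) (hF.neg_le_divergence r hr)
  rw [arcIntegral_divergence hF.contDiffOn_radial hF.contDiffOn_angular a b hr.1] at hdiv
  linarith [hT r hr]

/- The bound on the smaller arcs is uniform, hence passes to the limit. -/
theorem asympNonneg_of_interior (hρ : 0 < ρ) (hab : a ≤ b)
    (hflux : ∀ x y, a < x → x ≤ y → y < b → AsympNonneg (arcIntegral h x y)) :
    AsympNonneg (arcIntegral h a b) := by
  rcases hab.eq_or_lt with rfl | hab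
  · exact .of_tendsto_zero (by simp [funext (arcIntegral_self h a)])
  refine .of_neg_mul_le (C := D * (b - a) + 2 * B) hρ fun r hr => ?_
  have hint := fun x y => (hF.continuous_radial hr.1).intervalIntegrable
    (μ := MeasureTheory.volume) x y
  have hprim := intervalIntegral.continuous_primitive hint a
  let Φ : ℝ → ℝ := fun τ => (∫ θ in a..b - τ, h r θ) - (∫ θ in a..a + τ, h r θ)
    + (D * (b - τ - (a + τ)) + 2 * B) * r
  have hΦ : Tendsto Φ (𝓝[>] 0) (𝓝 (Φ 0)) :=
    Continuous.continuousWithinAt (((hprim.comp (by fun_prop)).sub (hprim.comp (by fun_prop))).add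
      (by fun_prop))
  have hΦ0 : 0 ≤ Φ 0 := by
    refine ge_of_tendsto hΦ ?_
    filter_upwards [Ioo_mem_nhdsGT (half_pos (sub_pos.2 hab))] with τ hτ
    have hxy : a + τ ≤ b - τ := by linarith [hτ.2]
    have hT : ∀ s ∈ Ioo 0 ρ, T s (b - τ) - T s (a + τ) ≤ 2 * B := fun s hs => by
      have hx := hF.abs_angular_le s hs (a + τ) ⟨by linarith [hτ.1], by linarith [hτ.1]⟩
      have hy := hF.abs_angular_le s hs (b - τ) ⟨by linarith [hτ.1], by linarith [hτ.1]⟩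
      linarith [neg_abs_le (T s (a + τ)), le_abs_self (T s (b - τ))]
    have := (hF.mono le_rfl (by linarith [hτ.1]) (by linarith [hτ.1])).neg_mul_le_arcIntegral hxy
      (hflux (a + τ) (b - τ) (by linarith [hτ.1]) hxy (by linarith [hτ.1])) hT r hr
    simp only [Φ, intervalIntegral.integral_interval_sub_left (hint _ _) (hint _ _)]
    rw [arcIntegral] at this
    linarith
  simp only [Φ, sub_zero, add_zero, intervalIntegral.integral_same] at hΦ0
  rw [arcIntegral]
  linarith

section Closed

variable {E : Set ℝ} (hE : IsClosed E)
  (hgap : ∀ x y, a ≤ x → x ≤ y → y ≤ b → Disjoint (Ioo x y) E → AsympNonneg (arcIntegral h x y))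
include hE hgap

theorem neg_mul_le_arcIntegral_of_mem_of_mem (hD : 0 < D) (ha : a ∈ E) (hb : b ∈ E) (hab : a ≤ b)
    (hzero : ∀ r ∈ Ioo 0 ρ, ∀ θ ∈ E, h r θ = 0 ∧ T r θ = 0) :
    ∀ r ∈ Ioo 0 ρ, -(D * (b - a) * r) ≤ arcIntegral h a b r := by
  intro r hr
  have hc := hF.continuous_radial hr.1
  have hψ : ∀ z, HasDerivAt (fun z => arcIntegral h a z r + D * (z - a) * r) (h r z + D * r) z :=
    fun z => (hc.integral_hasStrictDerivAt a z).hasDerivAt.add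
      ((((hasDerivAt_id z).sub_const a).const_mul D).mul_const r |>.congr_deriv (by ring))
  have hle := le_of_isClosed_of_le_across_gaps hE ha hb hab
    (HasDerivAt.continuousOn fun z _ => hψ z) (fun z hz _ _ => ?_)
    fun z hz w hw haz hzw hwb hd => ?_
  · rw [arcIntegral_self] at hle
    linarith
  · refine eventually_le_nhdsGT_of_hasDerivAt_pos (hψ z) ?_
    rw [(hzero r hr z hz).1, zero_add]
    exact mul_pos hD hr.1
  · have hflux := (hF.mono le_rfl haz hwb).neg_mul_le_arcIntegral (M := 0) hzw.le
      (hgap z w haz hzw.le hwb hd)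
      (fun s hs => by simp [(hzero s hs z hz).2, (hzero s hs w hw).2]) r hr
    have hadd := arcIntegral_add_adjacent hF.contDiffOn_radial.continuousOn hr.1 a z w
    linarith

theorem asympNonneg_of_isClosed (hρ : 0 < ρ) (hD : 0 < D) (hab : a ≤ b)
    (hzero : ∀ r ∈ Ioo 0 ρ, ∀ θ ∈ E, h r θ = 0 ∧ T r θ = 0) : AsympNonneg (arcIntegral h a b) := by
  rcases (Icc a b ∩ E).eq_empty_or_nonempty with hempty | hne
  · exact hgap a b le_rfl hab le_rfl
      ((disjoint_iff_inter_eq_empty.2 hempty).mono_left Ioo_subset_Icc_self)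
  have hK : IsCompact (Icc a b ∩ E) := isCompact_Icc.inter_right hE
  obtain ⟨p, ⟨hp, hpE⟩, hpmin⟩ := hK.exists_isLeast hne
  obtain ⟨q, ⟨hq, hqE⟩, hqmax⟩ := hK.exists_isGreatest hne
  have hpq : p ≤ q := hpmin ⟨hq, hqE⟩
  have hap : AsympNonneg (arcIntegral h a p) := hgap a p le_rfl hp.1 hp.2 <|
    disjoint_left.2 fun t ht htE => ht.2.not_ge (hpmin ⟨⟨ht.1.le, ht.2.le.trans hp.2⟩, htE⟩)
  have hqb : AsympNonneg (arcIntegral h q b) := hgap q b hq.1 hq.2 le_rfl <|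
    disjoint_left.2 fun t ht htE => ht.1.not_ge (hqmax ⟨⟨hq.1.trans ht.1.le, ht.2.le⟩, htE⟩)
  have hpq : AsympNonneg (arcIntegral h p q) :=
    .of_neg_mul_le hρ <| (hF.mono le_rfl hp.1 hq.2).neg_mul_le_arcIntegral_of_mem_of_mem hE
      (fun x y hx hxy hy => hgap x y (hp.1.trans hx) hxy (hy.trans hq.2)) hD hpE hqE hpq hzero
  refine ((hap.add hpq).add hqb).congr ?_
  filter_upwards [self_mem_nhdsWithin] with r hr
  have hadd := arcIntegral_add_adjacent hF.contDiffOn_radial.continuousOn hr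
  rw [hadd, hadd]

end Closed

theorem asympNonneg (hρ : 0 < ρ) (hD : 0 < D) (hab : a ≤ b)
    (hzero : ∀ θ, ∀ᶠ r in 𝓝[>] 0, h r θ = 0 ∧ T r θ = 0) : AsympNonneg (arcIntegral h a b) := by
  let E : ℕ → Set ℝ := fun k => {θ | ∀ r ∈ Ioo 0 (ρ / (k + 1)), h r θ = 0 ∧ T r θ = 0}
  have hE : ∀ k, IsClosed (E k) := fun k => by
    simp only [E, ofPred_forall]
    refine isClosed_biInter fun r hr => ?_
    exact (isClosed_eq (hF.continuous_radial hr.1) continuous_const).inter (isClosed_eq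
      (continuous_of_continuousOn_polarDomain hF.contDiffOn_angular.continuousOn hr.1)
      continuous_const)
  have hcover : Icc a b ⊆ ⋃ k, E k := fun θ _ => by
    obtain ⟨δ, hδ, hθ⟩ := mem_nhdsGT_iff_exists_Ioo_subset.1 (hzero θ)
    obtain ⟨k, hk⟩ := exists_nat_gt (ρ / δ)
    refine mem_iUnion.2 ⟨k, fun r hr => hθ ⟨hr.1, hr.2.trans ?_⟩⟩
    rw [div_lt_iff₀ hδ] at hk
    rw [div_lt_iff₀ (by positivity)]
    linarith [mem_Ioi.1 hδ]
  refine interval_induction_of_subset_iUnion (P := fun x y => AsympNonneg (arcIntegral h x y))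
    hcover (fun k x y hax hxy hyb hflux => ?_) hab
  have hk : 0 < ρ / (k + 1) := by positivity
  have hsub := fun x' y' hx hy => hF.mono (x := x') (y := y')
    (div_le_self hρ.le (by linarith [k.cast_nonneg (α := ℝ)] : (1 : ℝ) ≤ k + 1)) hx hy
  refine (hsub x y hax hyb).asympNonneg_of_isClosed (hE k) (fun x' y' hx hxy' hy hdisj => ?_)
    hk hD hxy fun r hr θ hθ => hθ r hr
  refine (hsub x' y' (hax.trans hx) (hy.trans hyb)).asympNonneg_of_interior hk hxy'
    fun x'' y'' hx'' hxy'' hy'' => hflux x'' y'' (hx.trans hx''.le) hxy'' (hy''.le.trans hy)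
      (hdisj.mono_left (Icc_subset_Ioo hx'' hy''))

end IsSectorField

/-! ### Truncation of the metric coefficient -/

section CompMax

variable {k k' : ℝ → ℝ} {c : ℝ} (hk : ∀ s, c ≤ s → HasDerivAt k (k' s) s) (hc : k' c = 0)
include hk hc

theorem hasDerivAt_comp_max (s : ℝ) :
    HasDerivAt (fun x => k (max x c)) (k' (max s c)) s := by
  rcases lt_trichotomy s c with hs | rfl | hs
  · rw [max_eq_right hs.le, hc]
    refine (hasDerivAt_const s (k c)).congr_of_eventuallyEq ?_
    filter_upwards [Iio_mem_nhds hs] with x hx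
    rw [max_eq_right (mem_Iio.1 hx).le]
  · have hleft : HasDerivWithinAt (fun x => k (max x s)) (k' s) (Iic s) s :=
      hc ▸ (hasDerivWithinAt_const s (Iic s) (k s)).congr_of_mem
        (fun x hx => by rw [max_eq_right hx]) self_mem_Iic
    have hright : HasDerivWithinAt (fun x => k (max x s)) (k' s) (Ici s) s :=
      (hk s le_rfl).hasDerivWithinAt.congr_of_mem
        (fun x hx => by rw [max_eq_left hx]) self_mem_Ici
    have h := hleft.union hright
    rw [Iic_union_Ici, hasDerivWithinAt_univ] at h
    rwa [max_self]
  · rw [max_eq_left hs.le]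
    refine (hk s hs.le).congr_of_eventuallyEq ?_
    filter_upwards [Ioi_mem_nhds hs] with x hx
    rw [max_eq_left (mem_Ioi.1 hx).le]

theorem contDiff_one_comp_max (hk' : ContinuousOn k' (Ici c)) :
    ContDiff ℝ 1 (fun x => k (max x c)) := by
  have hderiv := hasDerivAt_comp_max hk hc
  refine contDiff_one_iff_deriv.2 ⟨fun s => (hderiv s).differentiableAt, ?_⟩
  rw [funext fun s => (hderiv s).deriv]
  exact hk'.comp_continuous (by fun_prop) fun s => le_max_right s c

end CompMax

/-- A nondecreasing `C¹` function which vanishes for `s ≤ 1` and stays at bounded distance from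
the identity on `(0, ∞)`. -/
noncomputable def truncate (s : ℝ) : ℝ := max s 1 + (max s 1)⁻¹ - 2

/-- The derivative of `truncate`. -/
noncomputable def truncateDeriv (s : ℝ) : ℝ := 1 - (max s 1)⁻¹ ^ 2

/-- The counterpart of `s⁻¹` when `s` is replaced by `truncate s`: it vanishes for `s ≤ 1`, and
its derivative is `truncateDeriv s` times that of `s⁻¹`. -/
noncomputable def truncateInv (s : ℝ) : ℝ := (max s 1)⁻¹ - (max s 1)⁻¹ ^ 3 / 3 - 2 / 3

theorem hasDerivAt_add_inv {s : ℝ} (hs : 1 ≤ s) :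
    HasDerivAt (fun x : ℝ => x + x⁻¹ - 2) (1 - s⁻¹ ^ 2) s :=
  (((hasDerivAt_id s).add (hasDerivAt_inv (by positivity))).sub_const 2).congr_deriv (by
    field_simp; ring)

theorem hasDerivAt_inv_sub_inv_pow {s : ℝ} (hs : 1 ≤ s) :
    HasDerivAt (fun x : ℝ => x⁻¹ - x⁻¹ ^ 3 / 3 - 2 / 3) (-((1 - s⁻¹ ^ 2) * s⁻¹ ^ 2)) s :=
  have hinv := hasDerivAt_inv (x := s) (by positivity)
  ((hinv.sub ((hinv.pow 3).div_const 3)).sub_const (2 / 3)).congr_deriv (by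
    norm_num; ring)

section Truncate

variable {s : ℝ}

theorem truncate_of_le_one (hs : s ≤ 1) : truncate s = 0 := by
  rw [truncate, max_eq_right hs]; norm_num

theorem truncateDeriv_of_le_one (hs : s ≤ 1) : truncateDeriv s = 0 := by
  rw [truncateDeriv, max_eq_right hs]; norm_num

theorem truncateInv_of_le_one (hs : s ≤ 1) : truncateInv s = 0 := by
  rw [truncateInv, max_eq_right hs]; norm_num

theorem hasDerivAt_truncate : HasDerivAt truncate (truncateDeriv s) s :=
  hasDerivAt_comp_max (k' := fun s => 1 - s⁻¹ ^ 2) (fun _ => hasDerivAt_add_inv) (by norm_num) s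

theorem hasDerivAt_truncateInv : HasDerivAt truncateInv (-(truncateDeriv s / s ^ 2)) s := by
  refine (hasDerivAt_comp_max (fun _ => hasDerivAt_inv_sub_inv_pow) (by norm_num) s).congr_deriv ?_
  rcases le_total s 1 with hs | hs
  · rw [truncateDeriv_of_le_one hs, max_eq_right hs]; norm_num
  · rw [truncateDeriv, max_eq_left hs, inv_pow, div_eq_mul_inv]

theorem contDiff_truncate : ContDiff ℝ 1 truncate :=
  contDiff_one_comp_max (k' := fun s => 1 - s⁻¹ ^ 2) (fun _ => hasDerivAt_add_inv) (by norm_num)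
    fun s (hs : 1 ≤ s) => ContinuousAt.continuousWithinAt (by fun_prop (disch := positivity))

theorem contDiff_truncateInv : ContDiff ℝ 1 truncateInv :=
  contDiff_one_comp_max (fun _ => hasDerivAt_inv_sub_inv_pow) (by norm_num)
    fun s (hs : 1 ≤ s) => ContinuousAt.continuousWithinAt (by fun_prop (disch := positivity))

theorem inv_max_one_mem_Ioc (s : ℝ) : (max s 1)⁻¹ ∈ Ioc (0 : ℝ) 1 :=
  ⟨by positivity, inv_le_one_of_one_le₀ (le_max_right s 1)⟩

theorem truncateDeriv_nonneg : 0 ≤ truncateDeriv s := by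
  obtain ⟨h0, h1⟩ := inv_max_one_mem_Ioc s
  exact sub_nonneg.2 (pow_le_one₀ h0.le h1)

theorem abs_truncateInv_le : |truncateInv s| ≤ 1 := by
  obtain ⟨h0, h1⟩ := inv_max_one_mem_Ioc s
  rw [truncateInv, abs_le]
  constructor <;> nlinarith [pow_le_one₀ (n := 3) h0.le h1, pow_pos h0 3]

theorem abs_sub_truncate_le (hs : 0 < s) : |s - truncate s| ≤ 2 := by
  rcases le_total s 1 with h1 | h1
  · rw [truncate_of_le_one h1, sub_zero, abs_of_pos hs]; linarith
  · obtain ⟨h0, h1'⟩ := inv_max_one_mem_Ioc s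
    rw [max_eq_left h1] at h0 h1'
    rw [truncate, max_eq_left h1, abs_le]
    constructor <;> linarith

theorem abs_truncate_sub_truncateDeriv_mul_le : |truncate s - truncateDeriv s * s| ≤ 2 := by
  rcases le_total s 1 with h1 | h1
  · simp [truncate_of_le_one h1, truncateDeriv_of_le_one h1]
  · obtain ⟨h0, h1'⟩ := inv_max_one_mem_Ioc s
    rw [max_eq_left h1] at h0 h1'
    have : truncate s - truncateDeriv s * s = 2 * s⁻¹ - 2 := by
      rw [truncate, truncateDeriv, max_eq_left h1]; field_simp; ring
    rw [this, abs_le]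
    constructor <;> linarith

theorem abs_truncateInv_sub_truncateDeriv_div_le : |truncateInv s - truncateDeriv s / s| ≤ 1 := by
  rcases le_total s 1 with h1 | h1
  · simp [truncateInv_of_le_one h1, truncateDeriv_of_le_one h1]
  · obtain ⟨h0, h1'⟩ := inv_max_one_mem_Ioc s
    rw [max_eq_left h1] at h0 h1'
    have : truncateInv s - truncateDeriv s / s = 2 / 3 * s⁻¹ ^ 3 - 2 / 3 := by
      rw [truncateInv, truncateDeriv, max_eq_left h1]; field_simp; ring
    rw [this, abs_le]
    constructor <;> linarith [pow_le_one₀ (n := 3) h0.le h1', pow_pos h0 3]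

end Truncate

/-! ### The Laplace–Beltrami operator and the flux of the gradient -/

/-- The Laplace–Beltrami operator of `dr² + f(r,θ)² dθ²` acting on a function of the polar
coordinates. -/
noncomputable def laplaceBeltrami (f v : ℝ → ℝ → ℝ) (r θ : ℝ) : ℝ :=
  radialDeriv (radialDeriv v) r θ + (radialDeriv f r θ / f r θ) * radialDeriv v r θ
    + (1 / f r θ ^ 2) * angularDeriv (angularDeriv v) r θ
    - (angularDeriv f r θ / f r θ ^ 3) * angularDeriv v r θ

/-- The density `f ∂v/∂r` with respect to `dθ` of the flux of `grad v` through the circles centred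
at the origin, for the metric `dr² + f(r,θ)² dθ²`. -/
noncomputable def fluxDensity (f v : ℝ → ℝ → ℝ) (r θ : ℝ) : ℝ := f r θ * radialDeriv v r θ

/-- The flux of `grad v` through the circle of radius `r` centred at the origin. -/
noncomputable def circleFlux (f v : ℝ → ℝ → ℝ) (r : ℝ) : ℝ := arcIntegral (fluxDensity f v) (-π) π r

/-- The integral of the Laplacian of `v` over the circle of radius `r` centred at the origin, with
respect to the Riemannian arc length `f dθ`. -/
noncomputable def circleLaplacian (f v : ℝ → ℝ → ℝ) (r : ℝ) : ℝ :=
  arcIntegral (fun s t => f s t * laplaceBeltrami f v s t) (-π) π r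

section Divergence

variable {f v : ℝ → ℝ → ℝ} (hf : ContDiffOn ℝ 1 (uncurry f) polarDomain)
  (hv : ContDiffOn ℝ 2 (uncurry v) polarDomain)
include hf hv

theorem divergence_comp_mul {k l : ℝ → ℝ} {k' r θ : ℝ} (hk : HasDerivAt k k' (f r θ))
    (hl : HasDerivAt l (-(k' / f r θ ^ 2)) (f r θ)) (hr : 0 < r) (hfr : f r θ ≠ 0) :
    radialDeriv (fun s t => k (f s t) * radialDeriv v s t) r θ
        + angularDeriv (fun s t => l (f s t) * angularDeriv v s t) r θ
      = k' * (f r θ * laplaceBeltrami f v r θ)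
        + (k (f r θ) - k' * f r θ) * radialDeriv (radialDeriv v) r θ
        + (l (f r θ) - k' / f r θ) * angularDeriv (angularDeriv v) r θ := by
  have hradial : radialDeriv (fun s t => k (f s t) * radialDeriv v s t) r θ
      = k' * radialDeriv f r θ * radialDeriv v r θ
        + k (f r θ) * radialDeriv (radialDeriv v) r θ :=
    ((hk.comp r (hasDerivAt_radialDeriv hf hr)).mul (hasDerivAt_radialDeriv
      (contDiffOn_radialDeriv isOpen_polarDomain hv one_add_one_eq_two.le) hr)).deriv
  have hangular : angularDeriv (fun s t => l (f s t) * angularDeriv v s t) r θ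
      = -(k' / f r θ ^ 2) * angularDeriv f r θ * angularDeriv v r θ
        + l (f r θ) * angularDeriv (angularDeriv v) r θ :=
    ((hl.comp θ (hasDerivAt_angularDeriv hf hr)).mul (hasDerivAt_angularDeriv
      (contDiffOn_angularDeriv isOpen_polarDomain hv one_add_one_eq_two.le) hr)).deriv
  rw [hradial, hangular, laplaceBeltrami]
  field_simp
  ring

theorem mul_laplaceBeltrami {r θ : ℝ} (hr : 0 < r) (hfr : f r θ ≠ 0) :
    f r θ * laplaceBeltrami f v r θ = radialDeriv (fluxDensity f v) r θ
      + angularDeriv (fun s t => (f s t)⁻¹ * angularDeriv v s t) r θ := by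
  have := divergence_comp_mul hf hv (hasDerivAt_id (f r θ))
    ((hasDerivAt_inv hfr).congr_deriv (by rw [one_div])) hr hfr
  simp only [id_eq, one_mul, sub_self, zero_mul, add_zero, one_div] at this
  exact this.symm

theorem contDiffOn_fluxDensity : ContDiffOn ℝ 1 (uncurry (fluxDensity f v)) polarDomain :=
  hf.mul (contDiffOn_radialDeriv isOpen_polarDomain hv one_add_one_eq_two.le)

theorem contDiffOn_inv_mul_angularDeriv (hf_pos : ∀ r θ, 0 < r → 0 < f r θ) :
    ContDiffOn ℝ 1 (uncurry fun s t => (f s t)⁻¹ * angularDeriv v s t) polarDomain :=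
  (hf.inv fun p hp => (hf_pos p.1 p.2 hp).ne').mul
    (contDiffOn_angularDeriv isOpen_polarDomain hv one_add_one_eq_two.le)

theorem continuous_mul_laplaceBeltrami (hf_pos : ∀ r θ, 0 < r → 0 < f r θ) {r : ℝ}
    (hr : 0 < r) : Continuous fun θ => f r θ * laplaceBeltrami f v r θ := by
  simp_rw [fun θ => mul_laplaceBeltrami hf hv hr (hf_pos r θ hr).ne']
  exact (continuous_of_continuousOn_polarDomain
      (continuousOn_radialDeriv (contDiffOn_fluxDensity hf hv)) hr).add
    (continuous_of_continuousOn_polarDomain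
      (continuousOn_angularDeriv (contDiffOn_inv_mul_angularDeriv hf hv hf_pos)) hr)

theorem hasDerivAt_circleFlux (hf_pos : ∀ r θ, 0 < r → 0 < f r θ)
    (hf_per : ∀ r, Periodic (f r) (2 * π)) (hv_per : ∀ r, Periodic (v r) (2 * π)) {r : ℝ}
    (hr : 0 < r) :
    HasDerivAt (circleFlux f v) (circleLaplacian f v r) r := by
  have hends : ∀ {g : ℝ → ℝ}, Periodic g (2 * π) → g π = g (-π) := fun hg => by
    rw [← hg (-π)]; ring_nf
  refine (hasDerivAt_arcIntegral (contDiffOn_fluxDensity hf hv) (-π) π hr).congr_deriv ?_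
  have hdiv := arcIntegral_divergence (contDiffOn_fluxDensity hf hv)
    (contDiffOn_inv_mul_angularDeriv hf hv hf_pos) (-π) π hr
  rw [hends (hf_per r), hends (periodic_angularDeriv (hv_per r)), sub_self, add_zero] at hdiv
  rw [← hdiv]
  exact intervalIntegral.integral_congr fun θ _ =>
    (mul_laplaceBeltrami hf hv hr (hf_pos r θ hr).ne').symm

end Divergence

section Exp

variable {f v : ℝ → ℝ → ℝ} {r θ : ℝ}

theorem contDiff_exp_uncurry {n : WithTop ℕ∞} (hv : ContDiff ℝ n (uncurry v)) :
    ContDiff ℝ n (uncurry fun s t => exp (v s t)) := hv.exp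

theorem radialDeriv_exp (hv : Differentiable ℝ (uncurry v)) :
    radialDeriv (fun s t => exp (v s t)) = fun s t => exp (v s t) * radialDeriv v s t :=
  funext₂ fun _ _ => deriv_exp (hasDerivAt_fderiv_left (hv _)).differentiableAt

theorem angularDeriv_exp (hv : Differentiable ℝ (uncurry v)) :
    angularDeriv (fun s t => exp (v s t)) = fun s t => exp (v s t) * angularDeriv v s t :=
  funext₂ fun _ _ => deriv_exp (hasDerivAt_fderiv_right (hv _)).differentiableAt

theorem laplaceBeltrami_exp (hv : ContDiff ℝ 2 (uncurry v)) (hr : 0 < r) :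
    laplaceBeltrami f (fun s t => exp (v s t)) r θ
      = exp (v r θ) * (laplaceBeltrami f v r θ + radialDeriv v r θ ^ 2
        + (angularDeriv v r θ / f r θ) ^ 2) := by
  have hvd : Differentiable ℝ (uncurry v) := hv.differentiable two_ne_zero
  have hv1 : ContDiffOn ℝ 1 (uncurry v) polarDomain := (hv.of_le one_le_two).contDiffOn
  have hradial : radialDeriv (fun s t => exp (v s t) * radialDeriv v s t) r θ
      = exp (v r θ) * radialDeriv v r θ * radialDeriv v r θ
        + exp (v r θ) * radialDeriv (radialDeriv v) r θ :=
    ((hasDerivAt_radialDeriv hv1 hr).exp.mul (hasDerivAt_radialDeriv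
      (contDiffOn_radialDeriv isOpen_polarDomain hv.contDiffOn one_add_one_eq_two.le) hr)).deriv
  have hangular : angularDeriv (fun s t => exp (v s t) * angularDeriv v s t) r θ
      = exp (v r θ) * angularDeriv v r θ * angularDeriv v r θ
        + exp (v r θ) * angularDeriv (angularDeriv v) r θ :=
    ((hasDerivAt_angularDeriv hv1 hr).exp.mul (hasDerivAt_angularDeriv
      (contDiffOn_angularDeriv isOpen_polarDomain hv.contDiffOn one_add_one_eq_two.le) hr)).deriv
  rw [laplaceBeltrami, radialDeriv_exp hvd, angularDeriv_exp hvd, hradial, hangular,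
    laplaceBeltrami]
  ring

end Exp

/-! ### The flux through small arcs -/

theorem abs_mul_le_of_abs_le {x y A B : ℝ} (hx : |x| ≤ A) (hy : |y| ≤ B) : |x * y| ≤ A * B :=
  (abs_mul x y).trans_le (mul_le_mul hx hy (abs_nonneg y) ((abs_nonneg x).trans hx))

theorem exists_abs_le_of_continuous {F : ℝ → ℝ → ℝ} (hF : Continuous (uncurry F)) (R a b : ℝ) :
    ∃ M, ∀ r ∈ Icc 0 R, ∀ θ ∈ Icc a b, |F r θ| ≤ M := by
  obtain ⟨M, hM⟩ := (isCompact_Icc.prod isCompact_Icc).exists_bound_of_continuousOn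
    (s := Icc 0 R ×ˢ Icc a b) hF.continuousOn
  exact ⟨M, fun r hr θ hθ => hM (r, θ) ⟨hr, hθ⟩⟩

section SmallArcs

variable {f v : ℝ → ℝ → ℝ} {a b : ℝ} (hf : ContDiffOn ℝ 1 (uncurry f) polarDomain)
  (hf_pos : ∀ r θ, 0 < r → 0 < f r θ) (hv : ContDiff ℝ 2 (uncurry v))

include hf hf_pos hv

theorem exists_isSectorField_truncate
    (hsub : ∀ r θ, 0 < r → 0 ≤ laplaceBeltrami f v r θ) (a b : ℝ) :
    ∃ D > 0, ∃ B, IsSectorField (fun s t => truncate (f s t) * radialDeriv v s t)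
      (fun s t => truncateInv (f s t) * angularDeriv v s t) 1 a b D B := by
  have hr := contDiff_radialDeriv hv one_add_one_eq_two.le
  have hθ := contDiff_angularDeriv hv one_add_one_eq_two.le
  have hrr := (contDiff_radialDeriv (m := 0) hr (zero_add 1).le).continuous
  have hθθ := (contDiff_angularDeriv (m := 0) hθ (zero_add 1).le).continuous
  obtain ⟨B, hB⟩ := exists_abs_le_of_continuous hθ.continuous 1 a b
  obtain ⟨M, hM⟩ := exists_abs_le_of_continuous hrr 1 a b
  obtain ⟨N, hN⟩ := exists_abs_le_of_continuous hθθ 1 a b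
  refine ⟨2 * |M| + |N| + 1, by positivity, B, ⟨?_, ?_, fun r hr θ hθ => ?_, fun r hr θ hθ => ?_⟩⟩
  · exact (contDiff_truncate.comp_contDiffOn hf).mul hr.contDiffOn
  · exact (contDiff_truncateInv.comp_contDiffOn hf).mul hθ.contDiffOn
  · have hfr := hf_pos r θ hr.1
    rw [divergence_comp_mul hf hv.contDiffOn hasDerivAt_truncate hasDerivAt_truncateInv hr.1
      hfr.ne']
    have hmain := mul_nonneg (truncateDeriv_nonneg (s := f r θ))
      (mul_nonneg hfr.le (hsub r θ hr.1))
    have hradial : |(truncate (f r θ) - truncateDeriv (f r θ) * f r θ)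
        * radialDeriv (radialDeriv v) r θ| ≤ 2 * M :=
      abs_mul_le_of_abs_le abs_truncate_sub_truncateDeriv_mul_le (hM r ⟨hr.1.le, hr.2.le⟩ θ hθ)
    have hangular : |(truncateInv (f r θ) - truncateDeriv (f r θ) / f r θ)
        * angularDeriv (angularDeriv v) r θ| ≤ 1 * N :=
      abs_mul_le_of_abs_le abs_truncateInv_sub_truncateDeriv_div_le (hN r ⟨hr.1.le, hr.2.le⟩ θ hθ)
    linarith [neg_le_of_abs_le hradial, neg_le_of_abs_le hangular, le_abs_self M, le_abs_self N]
  · exact (abs_mul_le_of_abs_le abs_truncateInv_le (hB r ⟨hr.1.le, hr.2.le⟩ θ hθ)).trans_eq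
      (one_mul B)

theorem asympNonneg_flux_truncate
    (hf_lim : ∀ θ, Tendsto (fun r => f r θ) (𝓝[>] 0) (𝓝 0))
    (hsub : ∀ r θ, 0 < r → 0 ≤ laplaceBeltrami f v r θ) (hab : a ≤ b) :
    AsympNonneg (arcIntegral (fun s t => truncate (f s t) * radialDeriv v s t) a b) := by
  obtain ⟨D, hD, B, hF⟩ := exists_isSectorField_truncate hf hf_pos hv hsub a b
  refine hF.asympNonneg one_pos hD hab fun θ => ?_
  filter_upwards [(hf_lim θ).eventually (gt_mem_nhds one_pos)] with r hr
  simp only [truncate_of_le_one hr.le, truncateInv_of_le_one hr.le, zero_mul, and_self]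

theorem tendsto_arcIntegral_sub_truncate
    (hf_lim : ∀ θ, Tendsto (fun r => f r θ) (𝓝[>] 0) (𝓝 0)) (hab : a ≤ b) :
    Tendsto (arcIntegral (fun s t => (f s t - truncate (f s t)) * radialDeriv v s t) a b)
      (𝓝[>] 0) (𝓝 0) := by
  have hvr := contDiff_radialDeriv hv one_add_one_eq_two.le
  obtain ⟨M, hM⟩ := exists_abs_le_of_continuous hvr.continuous 1 a b
  have hcont : ContinuousOn
      (uncurry fun s t => (f s t - truncate (f s t)) * radialDeriv v s t) polarDomain :=
    (hf.continuousOn.sub (contDiff_truncate.continuous.comp_continuousOn hf.continuousOn)).mul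
      hvr.continuous.continuousOn
  have hlim : ∀ θ, Tendsto (fun r => (f r θ - truncate (f r θ)) * radialDeriv v r θ)
      (𝓝[>] 0) (𝓝 0) := fun θ => by
    have hvr0 : Tendsto (fun r => radialDeriv v r θ) (𝓝[>] 0) (𝓝 (radialDeriv v 0 θ)) :=
      ((hvr.continuous.comp (Continuous.prodMk_left θ)).tendsto 0).mono_left nhdsWithin_le_nhds
    simpa [truncate_of_le_one] using
      ((hf_lim θ).sub ((contDiff_truncate.continuous.tendsto 0).comp (hf_lim θ))).mul hvr0
  have hdom := intervalIntegral.tendsto_integral_filter_of_dominated_convergence (a := a) (b := b)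
    (μ := MeasureTheory.volume) (l := 𝓝[>] 0) (fun _ => 2 * M) ?_ ?_ intervalIntegrable_const
    (Eventually.of_forall fun θ _ => hlim θ)
  · rwa [intervalIntegral.integral_zero] at hdom
  · filter_upwards [self_mem_nhdsWithin] with r hr
    exact (continuous_of_continuousOn_polarDomain hcont hr).aestronglyMeasurable
  · filter_upwards [Ioo_mem_nhdsGT one_pos] with r hr
    refine Eventually.of_forall fun θ hθ => ?_
    exact abs_mul_le_of_abs_le (abs_sub_truncate_le (hf_pos r θ hr.1))
      (hM r ⟨hr.1.le, hr.2.le⟩ θ (Ioc_subset_Icc_self (uIoc_of_le hab ▸ hθ)))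

theorem asympNonneg_flux (hf_lim : ∀ θ, Tendsto (fun r => f r θ) (𝓝[>] 0) (𝓝 0))
    (hsub : ∀ r θ, 0 < r → 0 ≤ laplaceBeltrami f v r θ) (hab : a ≤ b) :
    AsympNonneg (arcIntegral (fluxDensity f v) a b) := by
  refine ((asympNonneg_flux_truncate hf hf_pos hv hf_lim hsub hab).add
    (.of_tendsto_zero (tendsto_arcIntegral_sub_truncate hf hf_pos hv hf_lim hab))).congr ?_
  filter_upwards [self_mem_nhdsWithin] with r hr
  have hvr := (contDiff_radialDeriv (m := 1) hv one_add_one_eq_two.le).continuous.continuousOn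
    (s := polarDomain)
  have htr := contDiff_truncate.continuous.comp_continuousOn hf.continuousOn
  rw [← arcIntegral_add (h := fun s t => truncate (f s t) * radialDeriv v s t)
    (T := fun s t => (f s t - truncate (f s t)) * radialDeriv v s t) (htr.mul hvr)
    ((hf.continuousOn.sub htr).mul hvr) a b hr]
  refine intervalIntegral.integral_congr fun θ _ => ?_
  simp only [fluxDensity]
  ring

end SmallArcs

/-! ### Subharmonic functions bounded above -/

section Parabolicity

variable {f v : ℝ → ℝ → ℝ} (hf : ContDiffOn ℝ 1 (uncurry f) polarDomain)
  (hf_pos : ∀ r θ, 0 < r → 0 < f r θ) (hv : ContDiff ℝ 2 (uncurry v))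

section Energy

include hf_pos hv

theorem mul_exp_mul_sq_le_mul_laplaceBeltrami_exp {r θ : ℝ} (hr : 0 < r)
    (hsub : 0 ≤ laplaceBeltrami f v r θ) :
    f r θ * exp (v r θ) * radialDeriv v r θ ^ 2
      ≤ f r θ * laplaceBeltrami f (fun s t => exp (v s t)) r θ := by
  rw [laplaceBeltrami_exp hv hr, ← mul_assoc]
  have := (hf_pos r θ hr).le
  gcongr
  linarith [sq_nonneg (angularDeriv v r θ / f r θ)]

theorem laplaceBeltrami_exp_nonneg {r θ : ℝ} (hr : 0 < r) (hsub : 0 ≤ laplaceBeltrami f v r θ) :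
    0 ≤ laplaceBeltrami f (fun s t => exp (v s t)) r θ := by
  have hfr := hf_pos r θ hr
  refine nonneg_of_mul_nonneg_right (le_trans ?_
    (mul_exp_mul_sq_le_mul_laplaceBeltrami_exp hf_pos hv hr hsub)) hfr
  positivity

end Energy

include hf hf_pos

theorem circleFlux_nonneg (hf_per : ∀ r, Periodic (f r) (2 * π))
    (hf_lim : ∀ θ, Tendsto (fun r => f r θ) (𝓝[>] 0) (𝓝 0)) (hv : ContDiff ℝ 2 (uncurry v))
    (hv_per : ∀ r, Periodic (v r) (2 * π)) (hsub : ∀ r θ, 0 < r → 0 ≤ laplaceBeltrami f v r θ)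
    {r : ℝ} (hr : 0 < r) : 0 ≤ circleFlux f v r := by
  have hlaplacian : ∀ s ∈ Ioo 0 (r + 1), -0 ≤ circleLaplacian f v s := fun s hs => by
    rw [neg_zero]
    exact intervalIntegral.integral_nonneg (by linarith [pi_pos]) fun θ _ =>
      mul_nonneg (hf_pos s θ hs.1).le (hsub s θ hs.1)
  have hflux := (asympNonneg_flux hf hf_pos hv hf_lim hsub (a := -π) (b := π)
    (by linarith [pi_pos])).neg_mul_le_of_neg_le_deriv (fun s hs =>
      hasDerivAt_circleFlux hf hv.contDiffOn hf_pos hf_per hv_per hs.1) hlaplacian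
  simpa only [zero_mul, neg_zero, circleFlux] using hflux r ⟨hr, lt_add_one r⟩

include hv

theorem arcIntegral_mul_exp_mul_sq_le_circleLaplacian_exp {r : ℝ} (hr : 0 < r)
    (hsub : ∀ θ, 0 ≤ laplaceBeltrami f v r θ) :
    arcIntegral (fun s t => f s t * exp (v s t) * radialDeriv v s t ^ 2) (-π) π r
      ≤ circleLaplacian f (fun s t => exp (v s t)) r := by
  have hf' : Continuous (f r) := continuous_of_continuousOn_polarDomain hf.continuousOn hr
  have hv' : Continuous (v r) := hv.continuous.uncurry_left r
  have hvr : Continuous (radialDeriv v r) :=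
    (contDiff_radialDeriv (m := 1) hv one_add_one_eq_two.le).continuous.uncurry_left r
  exact intervalIntegral.integral_mono_on (by linarith [pi_pos])
    (((hf'.mul hv'.rexp).mul (hvr.pow 2)).intervalIntegrable _ _)
    ((continuous_mul_laplaceBeltrami hf (contDiff_exp_uncurry hv).contDiffOn hf_pos
      hr).intervalIntegrable _ _)
    fun θ _ => mul_exp_mul_sq_le_mul_laplaceBeltrami_exp hf_pos hv hr (hsub θ)

theorem sq_circleFlux_exp_le {C r : ℝ} (hr : 0 < r) (hbdd : ∀ θ, v r θ ≤ C)
    (hsub : ∀ θ, 0 ≤ laplaceBeltrami f v r θ) :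
    circleFlux f (fun s t => exp (v s t)) r ^ 2
      ≤ exp C * arcIntegral f (-π) π r * circleLaplacian f (fun s t => exp (v s t)) r := by
  have hf' : Continuous (f r) := continuous_of_continuousOn_polarDomain hf.continuousOn hr
  have hv' : Continuous (v r) := hv.continuous.uncurry_left r
  have hvr : Continuous (radialDeriv v r) :=
    (contDiff_radialDeriv (m := 1) hv one_add_one_eq_two.le).continuous.uncurry_left r
  have hpi : -π ≤ π := by linarith [pi_pos]
  have hp : ∀ θ, 0 ≤ f r θ * exp (v r θ) := fun θ => mul_nonneg (hf_pos r θ hr).le (exp_pos _).le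
  have hmass : ∫ θ in -π..π, f r θ * exp (v r θ) ≤ exp C * arcIntegral f (-π) π r := by
    rw [arcIntegral, ← intervalIntegral.integral_const_mul]
    refine intervalIntegral.integral_mono hpi ((hf'.mul hv'.rexp).intervalIntegrable _ _)
      ((hf'.const_mul _).intervalIntegrable _ _) fun θ => ?_
    rw [mul_comm (exp C)]
    exact mul_le_mul_of_nonneg_left (exp_le_exp.2 (hbdd θ)) (hf_pos r θ hr).le
  calc circleFlux f (fun s t => exp (v s t)) r ^ 2
      = (∫ θ in -π..π, f r θ * exp (v r θ) * radialDeriv v r θ) ^ 2 := by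
        simp only [circleFlux, arcIntegral, fluxDensity,
          radialDeriv_exp (hv.differentiable two_ne_zero), mul_assoc]
    _ ≤ (∫ θ in -π..π, f r θ * exp (v r θ))
          * ∫ θ in -π..π, f r θ * exp (v r θ) * radialDeriv v r θ ^ 2 :=
        sq_integral_mul_le (hf'.mul hv'.rexp) hvr hp hpi
    _ ≤ exp C * arcIntegral f (-π) π r * circleLaplacian f (fun s t => exp (v s t)) r := by
        refine mul_le_mul hmass
          (arcIntegral_mul_exp_mul_sq_le_circleLaplacian_exp hf hf_pos hv hr hsub)
          (intervalIntegral.integral_nonneg hpi fun θ _ => mul_nonneg (hp θ) (sq_nonneg _)) ?_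
        exact (intervalIntegral.integral_nonneg hpi fun θ _ => hp θ).trans hmass

theorem radialDeriv_eq_zero_of_circleLaplacian_exp_eq_zero {r θ : ℝ} (hr : 0 < r)
    (hsub : ∀ θ, 0 ≤ laplaceBeltrami f v r θ)
    (hzero : circleLaplacian f (fun s t => exp (v s t)) r = 0) (hθ : θ ∈ Icc (-π) π) :
    radialDeriv v r θ = 0 := by
  have hf' : Continuous (f r) := continuous_of_continuousOn_polarDomain hf.continuousOn hr
  have hv' : Continuous (v r) := hv.continuous.uncurry_left r
  have hvr : Continuous (radialDeriv v r) :=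
    (contDiff_radialDeriv (m := 1) hv one_add_one_eq_two.le).continuous.uncurry_left r
  have hnonneg : ∀ t, 0 ≤ f r t * exp (v r t) * radialDeriv v r t ^ 2 := fun t =>
    mul_nonneg (mul_nonneg (hf_pos r t hr).le (exp_pos _).le) (sq_nonneg _)
  by_contra hne
  refine (arcIntegral_mul_exp_mul_sq_le_circleLaplacian_exp hf hf_pos hv hr hsub).not_gt ?_
  rw [hzero]
  refine intervalIntegral.integral_pos (by linarith [pi_pos])
    ((hf'.mul hv'.rexp).mul (hvr.pow 2)).continuousOn (fun t _ => hnonneg t) ⟨θ, hθ, ?_⟩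
  have := hf_pos r θ hr
  positivity

theorem circleFlux_exp_nonpos {G G' : ℝ → ℝ} {C a : ℝ} (ha : 0 < a)
    (hf_per : ∀ r, Periodic (f r) (2 * π)) (hv_per : ∀ r, Periodic (v r) (2 * π))
    (hsub : ∀ r θ, 0 < r → 0 ≤ laplaceBeltrami f v r θ) (hbdd : ∀ r θ, v r θ ≤ C)
    (hG : ∀ r, a ≤ r → HasDerivAt G (G' r) r) (hG' : ∀ r, a ≤ r → 0 ≤ G' r)
    (hgrowth : ∀ r, a ≤ r → G' r * arcIntegral f (-π) π r ≤ 1) (hlim : Tendsto G atTop atTop) :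
    circleFlux f (fun s t => exp (v s t)) a ≤ 0 := by
  refine nonpos_of_deriv_mul_sq_le_deriv
    (fun r hr => hasDerivAt_circleFlux hf (contDiff_exp_uncurry hv).contDiffOn hf_pos hf_per
      (fun r => (hv_per r).comp exp) (ha.trans_le hr))
    (fun r hr => (hG r hr).const_mul (exp (-C))) (fun r hr => mul_nonneg (exp_pos _).le (hG' r hr))
    (fun r hr => ?_) (hlim.const_mul_atTop (exp_pos _))
  have hr0 := ha.trans_le hr
  set J := circleFlux f (fun s t => exp (v s t)) r
  set J' := circleLaplacian f (fun s t => exp (v s t)) r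
  have hJ' : 0 ≤ J' := intervalIntegral.integral_nonneg (by linarith [pi_pos]) fun θ _ =>
    mul_nonneg (hf_pos r θ hr0).le (laplaceBeltrami_exp_nonneg hf_pos hv hr0 (hsub r θ hr0))
  calc exp (-C) * G' r * J ^ 2
      ≤ exp (-C) * G' r * (exp C * arcIntegral f (-π) π r * J') :=
        mul_le_mul_of_nonneg_left
          (sq_circleFlux_exp_le hf hf_pos hv hr0 (hbdd r) fun θ => hsub r θ hr0)
          (mul_nonneg (exp_pos _).le (hG' r hr))
    _ = exp (-C + C) * (G' r * arcIntegral f (-π) π r) * J' := by rw [exp_add]; ring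
    _ ≤ J' := by
        rw [neg_add_cancel, exp_zero, one_mul]
        exact mul_le_of_le_one_left hJ' (hgrowth r hr)

theorem circleLaplacian_exp_eq_zero {G G' : ℝ → ℝ} {C r₁ r : ℝ}
    (hf_per : ∀ r, Periodic (f r) (2 * π))
    (hf_lim : ∀ θ, Tendsto (fun r => f r θ) (𝓝[>] 0) (𝓝 0))
    (hv_per : ∀ r, Periodic (v r) (2 * π))
    (hsub : ∀ r θ, 0 < r → 0 ≤ laplaceBeltrami f v r θ) (hbdd : ∀ r θ, v r θ ≤ C)
    (hG : ∀ r, r₁ ≤ r → HasDerivAt G (G' r) r) (hG' : ∀ r, r₁ ≤ r → 0 ≤ G' r)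
    (hgrowth : ∀ r, r₁ ≤ r → G' r * arcIntegral f (-π) π r ≤ 1) (hlim : Tendsto G atTop atTop)
    (hr : 0 < r) : circleLaplacian f (fun s t => exp (v s t)) r = 0 := by
  have hw_per : ∀ r, Periodic (fun θ => exp (v r θ)) (2 * π) := fun r => (hv_per r).comp exp
  have hw_sub : ∀ r θ, 0 < r → 0 ≤ laplaceBeltrami f (fun s t => exp (v s t)) r θ :=
    fun r θ hr => laplaceBeltrami_exp_nonneg hf_pos hv hr (hsub r θ hr)
  have hderiv : ∀ r, 0 < r → HasDerivAt (circleFlux f fun s t => exp (v s t))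
      (circleLaplacian f (fun s t => exp (v s t)) r) r := fun r hr =>
    hasDerivAt_circleFlux hf (contDiff_exp_uncurry hv).contDiffOn hf_pos hf_per hw_per hr
  have hmono : MonotoneOn (circleFlux f fun s t => exp (v s t)) (Ioi 0) :=
    monotoneOn_of_hasDerivAt_nonneg (convex_Ioi 0) hderiv fun r hr =>
      intervalIntegral.integral_nonneg (by linarith [pi_pos]) fun θ _ =>
        mul_nonneg (hf_pos r θ hr).le (hw_sub r θ hr)
  have hzero : ∀ s, 0 < s → circleFlux f (fun s t => exp (v s t)) s = 0 := fun s hs => by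
    have hs' : 0 < max s r₁ := lt_max_of_lt_left hs
    have hnonpos := circleFlux_exp_nonpos hf hf_pos hv hs' hf_per hv_per hsub hbdd
      (fun t ht => hG t (le_of_max_le_right ht)) (fun t ht => hG' t (le_of_max_le_right ht))
      (fun t ht => hgrowth t (le_of_max_le_right ht)) hlim
    exact ((hmono hs hs' (le_max_left s r₁)).trans hnonpos).antisymm
      (circleFlux_nonneg hf hf_pos hf_per hf_lim (contDiff_exp_uncurry hv) hw_per hw_sub hs)
  refine (hderiv r hr).unique ((hasDerivAt_const r 0).congr_of_eventuallyEq ?_)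
  filter_upwards [Ioi_mem_nhds hr] with s hs using hzero s hs

end Parabolicity

section Pullback

/-- The expression of a function of the plane in polar coordinates. -/
noncomputable def polarPullback (u : ℝ × ℝ → ℝ) (r θ : ℝ) : ℝ := u (r * cos θ, r * sin θ)

variable {u : ℝ × ℝ → ℝ}

theorem contDiff_polarPullback {n : WithTop ℕ∞} (hu : ContDiff ℝ n u) :
    ContDiff ℝ n (uncurry (polarPullback u)) :=
  hu.comp ((contDiff_fst.mul contDiff_snd.cos).prodMk (contDiff_fst.mul contDiff_snd.sin))

theorem periodic_polarPullback (u : ℝ × ℝ → ℝ) (r : ℝ) :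
    Periodic (polarPullback u r) (2 * π) := fun θ => by
  rw [polarPullback, cos_add_two_pi, sin_add_two_pi, polarPullback]

theorem polarPullback_zero (u : ℝ × ℝ → ℝ) (θ : ℝ) : polarPullback u 0 θ = u 0 := by
  rw [polarPullback, zero_mul, zero_mul, Prod.mk_zero_zero]

theorem laplaceBeltrami_polarPullback (f : ℝ → ℝ → ℝ) (u : ℝ × ℝ → ℝ) (r θ : ℝ) :
    laplaceBeltrami f (polarPullback u) r θ = polarLaplacian f u r θ := rfl

theorem exists_polarPullback_eq (u : ℝ × ℝ → ℝ) (p : ℝ × ℝ) :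
    ∃ r ≥ 0, ∃ θ ∈ Icc (-π) π, polarPullback u r θ = u p := by
  let z : ℂ := ⟨p.1, p.2⟩
  refine ⟨‖z‖, norm_nonneg z, z.arg, Ioc_subset_Icc_self z.arg_mem_Ioc, ?_⟩
  rw [polarPullback, z.norm_mul_cos_arg, z.norm_mul_sin_arg]

theorem eq_apply_zero_of_radialDeriv_eq_zero (hu : Differentiable ℝ u)
    (hradial : ∀ r θ, 0 < r → θ ∈ Icc (-π) π → radialDeriv (polarPullback u) r θ = 0)
    (p : ℝ × ℝ) : u p = u 0 := by
  obtain ⟨r, hr, θ, hθ, hp⟩ := exists_polarPullback_eq u p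
  have hdiff : Differentiable ℝ fun s => polarPullback u s θ :=
    hu.comp ((differentiable_id.mul_const _).prodMk (differentiable_id.mul_const _))
  rw [← hp, ← polarPullback_zero u θ]
  rcases hr.eq_or_lt with rfl | hr
  · rfl
  obtain ⟨s, hs, hslope⟩ := exists_deriv_eq_slope _ hr hdiff.continuous.continuousOn
    hdiff.differentiableOn
  have := hradial s θ hs.1 hθ
  rw [radialDeriv, hslope, div_eq_zero_iff, sub_zero] at this
  exact sub_eq_zero.1 (this.resolve_right hr.ne')

end Pullback

/- The Ahlfors criterion: `∫ dr / L(r) = ∞`, where `L(r)` is the length of the circle of radius `r`,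
implies parabolicity. The function `G` is a lower bound for the primitive of `1 / L`. -/
theorem exists_eq_const_of_deriv_mul_arcIntegral_le_one {f : ℝ → ℝ → ℝ}
    (hf : ContDiffOn ℝ 1 (uncurry f) polarDomain) (hf_pos : ∀ r θ, 0 < r → 0 < f r θ)
    (hf_per : ∀ r, Periodic (f r) (2 * π))
    (hf_lim : ∀ θ, Tendsto (fun r => f r θ) (𝓝[>] 0) (𝓝 0)) {G G' : ℝ → ℝ} {r₁ : ℝ}
    (hG : ∀ r, r₁ ≤ r → HasDerivAt G (G' r) r) (hG' : ∀ r, r₁ ≤ r → 0 ≤ G' r)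
    (hgrowth : ∀ r, r₁ ≤ r → G' r * arcIntegral f (-π) π r ≤ 1) (hlim : Tendsto G atTop atTop)
    {u : ℝ × ℝ → ℝ} (hu : ContDiff ℝ 2 u) (hsub : ∀ r θ, 0 < r → 0 ≤ polarLaplacian f u r θ)
    (hbdd : ∃ C : ℝ, ∀ p : ℝ × ℝ, u p ≤ C) : ∃ c : ℝ, ∀ p : ℝ × ℝ, u p = c := by
  obtain ⟨C, hC⟩ := hbdd
  have hv := contDiff_polarPullback hu
  simp only [← laplaceBeltrami_polarPullback] at hsub
  refine ⟨u 0, eq_apply_zero_of_radialDeriv_eq_zero (hu.differentiable two_ne_zero)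
    fun r θ hr hθ => ?_⟩
  have hzero := circleLaplacian_exp_eq_zero hf hf_pos hv hf_per hf_lim
    (periodic_polarPullback u) hsub (fun _ _ => hC _) hG hG' hgrowth hlim hr
  exact radialDeriv_eq_zero_of_circleLaplacian_exp_eq_zero hf hf_pos hv hr
    (fun θ => hsub r θ hr) hzero hθ

theorem hasDerivAt_log_log {r : ℝ} (hr : 1 < r) :
    HasDerivAt (fun x => log (log x)) (r * log r)⁻¹ r :=
  ((hasDerivAt_log (one_pos.trans hr).ne').log (log_pos hr).ne').congr_deriv (by
    rw [mul_inv, div_eq_mul_inv])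

theorem exists_eq_const_of_arcIntegral_le_mul_mul_log {f : ℝ → ℝ → ℝ}
    (hf : ContDiffOn ℝ 1 (uncurry f) polarDomain) (hf_pos : ∀ r θ, 0 < r → 0 < f r θ)
    (hf_per : ∀ r, Periodic (f r) (2 * π))
    (hf_lim : ∀ θ, Tendsto (fun r => f r θ) (𝓝[>] 0) (𝓝 0)) {c r₁ : ℝ} (hr₁ : 1 < r₁)
    (hc : 0 < c) (hlength : ∀ r, r₁ ≤ r → arcIntegral f (-π) π r ≤ c * (r * log r))
    {u : ℝ × ℝ → ℝ} (hu : ContDiff ℝ 2 u) (hsub : ∀ r θ, 0 < r → 0 ≤ polarLaplacian f u r θ)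
    (hbdd : ∃ C : ℝ, ∀ p : ℝ × ℝ, u p ≤ C) : ∃ c : ℝ, ∀ p : ℝ × ℝ, u p = c := by
  have hrlog : ∀ r, r₁ ≤ r → 0 < r * log r := fun r hr =>
    mul_pos (by linarith) (log_pos (by linarith))
  refine exists_eq_const_of_deriv_mul_arcIntegral_le_one hf hf_pos hf_per hf_lim
    (fun r hr => (hasDerivAt_log_log (hr₁.trans_le hr)).div_const c)
    (fun r hr => div_nonneg (inv_nonneg.2 (hrlog r hr).le) hc.le) (fun r hr => ?_)
    ((tendsto_log_atTop.comp tendsto_log_atTop).atTop_div_const hc) hu hsub hbdd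
  rw [div_eq_inv_mul, ← mul_inv, inv_mul_le_one₀ (mul_pos hc (hrlog r hr))]
  exact hlength r hr

/-! ### From the curvature bound to the growth of circles -/

theorem hasDerivAt_mul_log {r : ℝ} (hr : 0 < r) :
    HasDerivAt (fun x => x * log x) (log r + 1) r :=
  ((hasDerivAt_id r).mul (hasDerivAt_log hr.ne')).congr_deriv (by
    simp only [id_eq]; field_simp)

/- Sturm comparison with `r log r` shifted down by a constant: the shift preserves the inequality
`ψ'' ≥ ψ / (r² log r)` and makes the logarithmic derivative of `ψ` at `a` large. -/
theorem le_div_mul_mul_log {φ φ' φ'' : ℝ → ℝ} {a δ : ℝ} (ha : 1 < a)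
    (hφ : ∀ r, a ≤ r → HasDerivAt φ (φ' r) r) (hφ' : ∀ r, a ≤ r → HasDerivAt φ' (φ'' r) r)
    (hpos : ∀ r, a ≤ r → 0 < φ r) (hle : ∀ r, a ≤ r → φ'' r ≤ φ r / (r ^ 2 * log r))
    (hδ : 0 < δ) (hδa : δ ≤ a * log a) (hinit : φ' a * δ ≤ φ a * (log a + 1)) {r : ℝ}
    (hr : a ≤ r) : φ r ≤ φ a / δ * (r * log r) := by
  set ψ : ℝ → ℝ := fun x => x * log x - (a * log a - δ)
  have ha0 : 0 < a := one_pos.trans ha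
  have hψa : ψ a = δ := sub_sub_cancel _ _
  have hψle : ∀ x, ψ x ≤ x * log x := fun x => sub_le_self _ (sub_nonneg.2 hδa)
  have hψpos : ∀ x, a ≤ x → 0 < ψ x := fun x hx => by
    have : a * log a ≤ x * log x :=
      mul_le_mul hx (log_le_log ha0 hx) (log_pos ha).le (ha0.le.trans hx)
    simp only [ψ]
    linarith
  have hcompare : ∀ x, a ≤ x → φ'' x * ψ x ≤ φ x * x⁻¹ := fun x hx => by
    have hx0 := ha0.trans_le hx
    have hlog := log_pos (ha.trans_le hx)
    calc φ'' x * ψ x ≤ φ x / (x ^ 2 * log x) * ψ x :=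
          mul_le_mul_of_nonneg_right (hle x hx) (hψpos x hx).le
      _ ≤ φ x / (x ^ 2 * log x) * (x * log x) :=
          mul_le_mul_of_nonneg_left (hψle x) (div_nonneg (hpos x hx).le (by positivity))
      _ = φ x * x⁻¹ := by field_simp
  have hanti := antitoneOn_div_of_sturm hφ hφ'
    (fun x hx => (hasDerivAt_mul_log (ha0.trans_le hx)).sub_const _)
    (fun x hx => (hasDerivAt_log (ha0.trans_le hx).ne').add_const 1) hψpos hcompare
    (by rwa [sub_sub_cancel])
  calc φ r ≤ φ a / ψ a * ψ r := (div_le_iff₀ (hψpos r hr)).1 (hanti self_mem_Ici hr hr)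
    _ ≤ φ a / δ * (r * log r) := by
        rw [hψa]
        exact mul_le_mul_of_nonneg_left (hψle r) (div_nonneg (hpos a le_rfl).le hδ.le)

theorem exists_pos_le_of_continuous {g : ℝ → ℝ} (hg : Continuous g) (x y : ℝ) :
    ∃ K > 0, ∀ t ∈ Icc x y, g t ≤ K := by
  obtain ⟨K, hK⟩ := (isCompact_Icc (a := x) (b := y)).bddAbove_image hg.continuousOn
  exact ⟨max K 1, by positivity, fun t ht => (hK (mem_image_of_mem g ht)).trans (le_max_left K 1)⟩

theorem exists_le_mul_mul_log_of_radialDeriv_le {f : ℝ → ℝ → ℝ}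
    (hf : ContDiffOn ℝ 2 (uncurry f) polarDomain) (hf_pos : ∀ r θ, 0 < r → 0 < f r θ) {a : ℝ}
    (ha : 1 < a)
    (hcurv : ∀ r θ, a ≤ r → radialDeriv (radialDeriv f) r θ ≤ f r θ / (r ^ 2 * log r))
    (x y : ℝ) : ∃ C > 0, ∀ r ≥ a, ∀ θ ∈ Icc x y, f r θ ≤ C * (r * log r) := by
  have ha0 : 0 < a := one_pos.trans ha
  have hf1 := hf.of_le one_le_two
  have hfr := contDiffOn_radialDeriv (m := 1) isOpen_polarDomain hf one_add_one_eq_two.le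
  have hcont := continuous_of_continuousOn_polarDomain hf.continuousOn ha0
  obtain ⟨N, hN0, hN⟩ := exists_pos_le_of_continuous hcont x y
  obtain ⟨K, hK0, hK⟩ := exists_pos_le_of_continuous
    ((continuous_of_continuousOn_polarDomain hfr.continuousOn ha0).div hcont fun θ =>
      (hf_pos a θ ha0).ne') x y
  have hlog := log_pos ha
  set δ := min (a * log a) ((log a + 1) / K)
  have hδ : 0 < δ := lt_min (by positivity) (by positivity)
  refine ⟨N / δ, by positivity, fun r hr θ hθ => ?_⟩
  have hfa := hf_pos a θ ha0
  have hinit : radialDeriv f a θ * δ ≤ f a θ * (log a + 1) :=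
    calc radialDeriv f a θ * δ ≤ K * f a θ * δ :=
          mul_le_mul_of_nonneg_right ((div_le_iff₀ hfa).1 (hK θ hθ)) hδ.le
      _ = f a θ * (δ * K) := by ring
      _ ≤ f a θ * (log a + 1) :=
          mul_le_mul_of_nonneg_left ((le_div_iff₀ hK0).1 (min_le_right _ _)) hfa.le
  refine (le_div_mul_mul_log ha (fun s hs => hasDerivAt_radialDeriv hf1 (ha0.trans_le hs))
    (fun s hs => hasDerivAt_radialDeriv hfr (ha0.trans_le hs))
    (fun s hs => hf_pos s θ (ha0.trans_le hs)) (fun s hs => hcurv s θ hs) hδ (min_le_left _ _)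
    hinit hr).trans ?_
  have hrlog := mul_nonneg (ha0.le.trans hr) (log_pos (ha.trans_le hr)).le
  gcongr
  exact hN θ hθ

theorem arcIntegral_le_sub_mul {h : ℝ → ℝ → ℝ} (hh : ContinuousOn (uncurry h) polarDomain)
    {x y r B : ℝ} (hr : 0 < r) (hxy : x ≤ y) (hB : ∀ θ ∈ Icc x y, h r θ ≤ B) :
    arcIntegral h x y r ≤ (y - x) * B := by
  calc arcIntegral h x y r ≤ ∫ _ in x..y, B :=
        intervalIntegral.integral_mono_on hxy
          ((continuous_of_continuousOn_polarDomain hh hr).intervalIntegrable x y)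
          intervalIntegrable_const hB
    _ = (y - x) * B := by rw [intervalIntegral.integral_const, smul_eq_mul]

theorem ahlfors_milnor_greene_wu_parabolicity_general (f : ℝ → ℝ → ℝ)
    (hf_smooth : ContDiffOn ℝ 2 (fun p : ℝ × ℝ => f p.1 p.2) {p : ℝ × ℝ | 0 < p.1})
    (hf_pos : ∀ r θ, 0 < r → 0 < f r θ)
    (hf_per : ∀ r θ, f r (θ + 2 * π) = f r θ)
    (hf_lim0 : ∀ θ, Tendsto (fun r => f r θ) (𝓝[>] 0) (𝓝 0))
    (r₀ : ℝ) (hr₀ : 1 < r₀)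
    (hcurv : ∀ r θ, r₀ < r →
      -(deriv (deriv (fun s => f s θ)) r / f r θ) ≥ -(1 / (r ^ 2 * log r)))
    (u : ℝ × ℝ → ℝ) (hu : ContDiff ℝ 2 u)
    (hsub : ∀ r θ, 0 < r → 0 ≤ polarLaplacian f u r θ)
    (hbdd : ∃ C : ℝ, ∀ p : ℝ × ℝ, u p ≤ C) :
    ∃ c : ℝ, ∀ p : ℝ × ℝ, u p = c := by
  have ha : 1 < r₀ + 1 := by linarith
  have hcurv' : ∀ r θ, r₀ + 1 ≤ r →
      radialDeriv (radialDeriv f) r θ ≤ f r θ / (r ^ 2 * log r) := fun r θ hr => by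
    have := (div_le_iff₀ (hf_pos r θ (by linarith))).1 (neg_le_neg_iff.1 (hcurv r θ (by linarith)))
    rwa [one_div_mul_eq_div] at this
  obtain ⟨C, hC, hfC⟩ := exists_le_mul_mul_log_of_radialDeriv_le hf_smooth hf_pos ha hcurv' (-π) π
  refine exists_eq_const_of_arcIntegral_le_mul_mul_log (hf_smooth.of_le one_le_two) hf_pos hf_per
    hf_lim0 ha (c := (π - -π) * C) (mul_pos (by linarith [pi_pos]) hC) (fun r hr => ?_) hu hsub hbdd
  rw [mul_assoc]
  exact arcIntegral_le_sub_mul hf_smooth.continuousOn (by linarith) (by linarith [pi_pos])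
    (hfC r hr)

/-- The Ahlfors–Milnor–Greene–Wu parabolicity criterion: if the Gaussian curvature of
`g = dr² + f(r,θ)² dθ²` satisfies `K_g(r,θ) ≥ −1/(r² log r)` for all `r > r₀ > 1`, then
`(ℝ², g)` is parabolic: every subharmonic function bounded above is constant. -/
theorem ahlfors_milnor_greene_wu_parabolicity (f : ℝ → ℝ → ℝ)
    (hf_smooth : ContDiffOn ℝ (⊤ : ℕ∞) (fun p : ℝ × ℝ => f p.1 p.2) {p : ℝ × ℝ | 0 < p.1})
    (hf_pos : ∀ r θ, 0 < r → 0 < f r θ)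
    (hf_per : ∀ r θ, f r (θ + 2 * Real.pi) = f r θ)
    (hf_lim0 : ∀ θ, Tendsto (fun r => f r θ) (nhdsWithin 0 (Set.Ioi 0)) (nhds 0))
    (hf_lim1 : ∀ θ, Tendsto (fun r => deriv (fun s => f s θ) r)
      (nhdsWithin 0 (Set.Ioi 0)) (nhds 1))
    (r₀ : ℝ) (hr₀ : 1 < r₀)
    (hcurv : ∀ r θ, r₀ < r →
      -(deriv (deriv (fun s => f s θ)) r / f r θ) ≥ -(1 / (r ^ 2 * Real.log r)))
    (u : ℝ × ℝ → ℝ) (hu : ContDiff ℝ 2 u)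
    (hsub : ∀ r θ, 0 < r → 0 ≤ polarLaplacian f u r θ)
    (hbdd : ∃ C : ℝ, ∀ p : ℝ × ℝ, u p ≤ C) :
    ∃ c : ℝ, ∀ p : ℝ × ℝ, u p = c :=
  ahlfors_milnor_greene_wu_parabolicity_general f
    (hf_smooth.of_le (WithTop.coe_le_coe.2 (le_top : (2 : ℕ∞) ≤ ⊤))) hf_pos hf_per hf_lim0 r₀ hr₀
    hcurv u hu hsub hbdd
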